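/- Let f : ℝⁿ → ℝ be convex and L-Lipschitz, t > 0, δ > 0, x ∈ ℝⁿ. Let π be the density proportional to exp(−(f(z) + ‖z − x‖²/(2t))/δ), let π* be the density proportional to exp(−(2f(z) + ‖z − x‖²/(2t))/δ), and let μ = ∫ z π(z) dz. Then ∫ ‖z − μ‖² π*(z) dz ≤ n t δ + (2√(n t δ) + 3 L t)². -/

import Mathlib

open MeasureTheory Real

/-!
Both densities have the form `exp (-V)` with `V` strongly convex of modulus `m = 1 / (t δ)`.
For the minimiser `z₀` of such a `V`, strong convexity makes `V` drop by at least
`(1 - a²) m / 2 * ‖z - z₀‖²` when `z` is contracted towards `z₀` by a factor `a < 1`. Integrating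
this in the form `(1 + (1 - a²) m / 2 * ‖z - z₀‖²) exp (-V z) ≤ exp (-V (z₀ + a (z - z₀)))` and
letting `a → 1` gives `E ‖z - z₀‖² ≤ n / m`, a substitute for integration by parts that needs no
derivative. Hence the mean is within `√(n / m)` of the minimiser. The two minimisers are at most
`L t` apart, because the potentials differ by the `L / δ`-Lipschitz function `f / δ`, and
Minkowski's inequality in `L²(π*)` bounds the distance to `μ` by `2 √(n / m) + L t`.
-/

open Set Filter Topology Module
open scoped NNReal

section StrongConvexity

variable {E : Type*} [NormedAddCommGroup E] [NormedSpace ℝ E]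
  {s : Set E} {m : ℝ} {U V : E → ℝ} {u v z : E}

theorem add_mul_sq_norm_sub_le_of_isMinOn (hV : StrongConvexOn s m V) (hv : v ∈ s)
    (hmin : IsMinOn V s v) (hz : z ∈ s) : V v + m / 2 * ‖z - v‖ ^ 2 ≤ V z := by
  have hle : ∀ᶠ a in 𝓝[>] (0 : ℝ), V v + (1 - a) * (m / 2 * ‖z - v‖ ^ 2) ≤ V z := by
    filter_upwards [Ioo_mem_nhdsGT one_pos] with a ha
    have ha' : 0 ≤ 1 - a := by linarith [ha.2]
    have hconv := hV.2 hv hz ha' ha.1.le (by ring)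
    have hval := hmin (hV.1 hv hz ha' ha.1.le (by ring))
    simp only [mem_ofPred_eq, smul_eq_mul, norm_sub_rev v z] at hconv hval
    refine le_of_mul_le_mul_left ?_ ha.1
    linarith
  have hlim : Tendsto (fun a : ℝ => V v + (1 - a) * (m / 2 * ‖z - v‖ ^ 2)) (𝓝[>] 0)
      (𝓝 (V v + (1 - 0) * (m / 2 * ‖z - v‖ ^ 2))) :=
    (Continuous.tendsto (by fun_prop) 0).mono_left nhdsWithin_le_nhds
  simpa using le_of_tendsto hlim hle

theorem apply_homothety_add_le_of_isMinOn (hV : StrongConvexOn s m V) (hv : v ∈ s)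
    (hmin : IsMinOn V s v) (hz : z ∈ s) {a : ℝ} (ha₀ : 0 ≤ a) (ha₁ : a ≤ 1) :
    V (AffineMap.homothety v a z) + (1 - a ^ 2) * (m / 2 * ‖z - v‖ ^ 2) ≤ V z := by
  have hpoint : AffineMap.homothety v a z = (1 - a) • v + a • z := by
    rw [AffineMap.homothety_eq_lineMap, AffineMap.lineMap_apply_module]
  have hconv := hV.2 hv hz (sub_nonneg.2 ha₁) ha₀ (by ring)
  have hgrowth := mul_le_mul_of_nonneg_left
    (add_mul_sq_norm_sub_le_of_isMinOn hV hv hmin hz) (sub_nonneg.2 ha₁)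
  simp only [smul_eq_mul, norm_sub_rev v z] at hconv
  rw [hpoint]
  linarith

theorem exp_neg_add_mul_le_exp_neg_homothety_of_isMinOn (hV : StrongConvexOn s m V)
    (hv : v ∈ s) (hmin : IsMinOn V s v) (hz : z ∈ s) {a : ℝ} (ha₀ : 0 ≤ a) (ha₁ : a ≤ 1) :
    exp (-V z) + (1 - a ^ 2) * (m / 2) * (‖z - v‖ ^ 2 * exp (-V z))
      ≤ exp (-V (AffineMap.homothety v a z)) := by
  have hdrop := apply_homothety_add_le_of_isMinOn hV hv hmin hz ha₀ ha₁
  set w := AffineMap.homothety v a z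
  calc exp (-V z) + (1 - a ^ 2) * (m / 2) * (‖z - v‖ ^ 2 * exp (-V z))
      = ((1 - a ^ 2) * (m / 2 * ‖z - v‖ ^ 2) + 1) * exp (-V z) := by ring
    _ ≤ exp (V z - V w) * exp (-V z) := by
        gcongr
        linarith [Real.add_one_le_exp (V z - V w)]
    _ = exp (-V w) := by rw [← Real.exp_add]; ring_nf

theorem mul_norm_sub_le_of_isMinOn_of_lipschitzOnWith {K : ℝ≥0} (hU : StrongConvexOn s m U)
    (hV : StrongConvexOn s m V) (hVU : LipschitzOnWith K (V - U) s) (hu : u ∈ s)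
    (humin : IsMinOn U s u) (hv : v ∈ s) (hvmin : IsMinOn V s v) : m * ‖v - u‖ ≤ K := by
  have hUgrowth := add_mul_sq_norm_sub_le_of_isMinOn hU hu humin hv
  have hVgrowth := add_mul_sq_norm_sub_le_of_isMinOn hV hv hvmin hu
  have hlip := (le_abs_self _).trans (hVU.dist_le_mul u hu v hv)
  rw [dist_eq_norm] at hlip
  simp only [Pi.sub_apply, norm_sub_rev u v] at hVgrowth hlip
  obtain hzero | hpos := (norm_nonneg (v - u)).eq_or_lt
  · simp [← hzero]
  · refine le_of_mul_le_mul_right ?_ hpos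
    linarith

theorem continuous_of_strongConvexOn_univ [FiniteDimensional ℝ E]
    (hV : StrongConvexOn univ m V) (hm : 0 < m) : Continuous V :=
  (hV.convexOn fun r => by positivity).locallyLipschitz.continuous

theorem exists_isMinOn_univ_of_strongConvexOn [FiniteDimensional ℝ E]
    (hV : StrongConvexOn univ m V) (hm : 0 < m) : ∃ v, IsMinOn V univ v := by
  have hcont := continuous_of_strongConvexOn_univ hV hm
  obtain ⟨b, -, hb⟩ := (isCompact_closedBall (0 : E) 1).exists_isMinOn
    ⟨0, by simp⟩ hcont.continuousOn
  -- Convexity along the ray from `0` through `z` puts `V z` above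
  -- `V 0 + ‖z‖ * (m / 2 * (‖z‖ - 1) - (V 0 - V b))`, whence the radius.
  have hfar : ∀ z : E, 1 + 2 / m * (V 0 - V b) < ‖z‖ → V 0 ≤ V z := by
    intro z hz
    have hb0 : V b ≤ V 0 := hb (by simp)
    have hone : 1 < ‖z‖ := by
      have : 0 ≤ 2 / m * (V 0 - V b) := mul_nonneg (by positivity) (sub_nonneg.2 hb0)
      linarith
    have hbz : V b ≤ V (‖z‖⁻¹ • z) := hb (by simp [norm_smul, (one_pos.trans hone).ne'])
    have hconv := hV.2 (mem_univ 0) (mem_univ z)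
      (sub_nonneg.2 (inv_le_one_of_one_le₀ hone.le)) (by positivity) (sub_add_cancel 1 ‖z‖⁻¹)
    simp only [smul_zero, zero_add, zero_sub, norm_neg, smul_eq_mul] at hconv
    have hscaled : ‖z‖ * V b ≤ (‖z‖ - 1) * V 0 + V z - (‖z‖ - 1) * (m / 2 * ‖z‖) := by
      refine (mul_le_mul_of_nonneg_left (hbz.trans hconv) (norm_nonneg z)).trans_eq ?_
      field_simp
    have hgap : V 0 - V b ≤ m / 2 * (‖z‖ - 1) := by
      calc V 0 - V b = m / 2 * (2 / m * (V 0 - V b)) := by field_simp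
        _ ≤ m / 2 * (‖z‖ - 1) := by gcongr; linarith
    linarith [mul_le_mul_of_nonneg_left hgap (norm_nonneg z)]
  obtain ⟨v, hv⟩ := hcont.exists_forall_le' 0 <| by
    filter_upwards [(isCompact_closedBall (0 : E) (1 + 2 / m * (V 0 - V b))).compl_mem_cocompact]
      with z hz
    exact hfar z (by simpa using hz)
  exact ⟨v, isMinOn_univ_iff.2 hv⟩

end StrongConvexity

theorem strongConvexOn_add_sq_norm_sub_div {E : Type*} [NormedAddCommGroup E]
    [InnerProductSpace ℝ E] {s : Set E} {f : E → ℝ} (hf : ConvexOn ℝ s f) (t : ℝ) {δ : ℝ}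
    (hδ : 0 ≤ δ) (x : E) :
    StrongConvexOn s (t * δ)⁻¹ fun z => (f z + ‖z - x‖ ^ 2 / (2 * t)) / δ := by
  have haffine : ConvexOn ℝ s fun z => -(t * δ)⁻¹ * inner ℝ x z :=
    ((-(t * δ)⁻¹) • innerₛₗ ℝ x).convexOn hf.1
  rw [strongConvexOn_iff_convex]
  refine (((hf.smul (inv_nonneg.2 hδ)).add haffine).add_const
    (‖x‖ ^ 2 / (2 * t * δ))).congr fun z _ => ?_
  simp only [Pi.add_apply, norm_sub_sq_real, real_inner_comm, smul_eq_mul]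
  ring

section LpNorm

variable {Ω F : Type*} [MeasurableSpace Ω] [NormedAddCommGroup F]

theorem sq_lpNorm_two {μ : Measure Ω} {g : Ω → F} (hg : AEStronglyMeasurable g μ) :
    lpNorm g 2 μ ^ 2 = ∫ ω, ‖g ω‖ ^ 2 ∂μ := by
  rw [lpNorm_eq_integral_norm_rpow_toReal two_ne_zero ENNReal.ofNat_ne_top hg,
    ← Real.rpow_mul_natCast (by positivity)]
  simp

theorem norm_integral_le_lpNorm [NormedSpace ℝ F] {P : Measure Ω} [IsProbabilityMeasure P]
    {p : ENNReal} (hp : 1 ≤ p) {g : Ω → F} (hg : MemLp g p P) :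
    ‖∫ ω, g ω ∂P‖ ≤ lpNorm g p P := by
  calc ‖∫ ω, g ω ∂P‖ ≤ lpNorm g 1 P := by
        rw [lpNorm_one_eq_integral_norm hg.1]
        exact norm_integral_le_integral_norm g
    _ ≤ lpNorm g p P := by
        rw [← toReal_eLpNorm hg.1, ← toReal_eLpNorm hg.1]
        exact ENNReal.toReal_mono hg.eLpNorm_ne_top (eLpNorm_le_eLpNorm_of_exponent_le hp hg.1)

theorem integral_mul_exp_smul_eq_integral_tilted [NormedSpace ℝ F] {ν : Measure Ω} {u : Ω → ℝ}
    {c : ℝ} (hc : ∫ ω, c * exp (u ω) ∂ν = 1) (g : Ω → F) :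
    ∫ ω, (c * exp (u ω)) • g ω ∂ν = ∫ ω, g ω ∂ν.tilted u := by
  rw [integral_const_mul] at hc
  simp_rw [integral_tilted, div_eq_inv_mul, ← eq_inv_of_mul_eq_one_left hc]

end LpNorm

section LogConcave

variable {E : Type*} [NormedAddCommGroup E] [NormedSpace ℝ E] [FiniteDimensional ℝ E]
  [MeasurableSpace E] [BorelSpace E] (ν : Measure E) [ν.IsAddHaarMeasure]
  {m : ℝ} {U V : E → ℝ} {v : E}

theorem integrable_exp_neg_mul_sq_norm_sub {b : ℝ} (hb : 0 < b) (v : E) :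
    Integrable (fun z => exp (-b * ‖z - v‖ ^ 2)) ν := by
  suffices Integrable (fun z : E => exp (-b * ‖z‖ ^ 2)) ν from this.comp_sub_right v
  obtain _ | _ := subsingleton_or_nontrivial E
  · exact .of_finite
  rw [integrable_fun_norm_addHaar ν (f := fun r : ℝ => exp (-b * r ^ 2))]
  have hdim : (-1 : ℝ) < (finrank ℝ E - 1 : ℕ) := neg_one_lt_zero.trans_le (Nat.cast_nonneg _)
  simpa [Real.rpow_natCast] using integrableOn_rpow_mul_exp_neg_mul_sq hb hdim

theorem integrable_exp_neg_of_strongConvexOn (hV : StrongConvexOn univ m V) (hm : 0 < m) :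
    Integrable (fun z => exp (-V z)) ν := by
  have hcont := continuous_of_strongConvexOn_univ hV hm
  obtain ⟨v, hv⟩ := exists_isMinOn_univ_of_strongConvexOn hV hm
  refine ((integrable_exp_neg_mul_sq_norm_sub ν (half_pos hm) v).const_mul
    (exp (-V v))).mono' (by fun_prop) (.of_forall fun z => ?_)
  rw [Real.norm_of_nonneg (Real.exp_nonneg _), ← Real.exp_add]
  gcongr
  linarith [add_mul_sq_norm_sub_le_of_isMinOn hV (mem_univ v) hv (mem_univ z)]

theorem integrable_comp_homothety {F : Type*} [NormedAddCommGroup F] {g : E → F}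
    (hg : Integrable g ν) (v : E) {a : ℝ} (ha : a ≠ 0) :
    Integrable (fun z => g (AffineMap.homothety v a z)) ν :=
  ((integrable_comp_smul_iff ν (fun w => g (w + v)) ha).2 (hg.comp_add_right v)).comp_sub_right v

theorem integral_comp_homothety {F : Type*} [NormedAddCommGroup F] [NormedSpace ℝ F]
    (g : E → F) (v : E) (a : ℝ) :
    ∫ z, g (AffineMap.homothety v a z) ∂ν = |(a ^ finrank ℝ E)⁻¹| • ∫ z, g z ∂ν := by
  simp only [AffineMap.homothety_apply, vsub_eq_sub, vadd_eq_add]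
  rw [integral_sub_right_eq_self (fun w => g (a • w + v)) v,
    Measure.integral_comp_smul ν (fun w => g (w + v)) a, integral_add_right_eq_self g v]

theorem integrable_sq_norm_sub_mul_exp_neg (hV : StrongConvexOn univ m V) (hm : 0 < m)
    (hv : IsMinOn V univ v) : Integrable (fun z => ‖z - v‖ ^ 2 * exp (-V z)) ν := by
  have hcont := continuous_of_strongConvexOn_univ hV hm
  have hhalf := integrable_comp_homothety ν (integrable_exp_neg_of_strongConvexOn ν hV hm) v
    (one_half_pos (α := ℝ)).ne'
  -- `3 / 8 * m` is `(1 - a ^ 2) * (m / 2)` at `a = 1 / 2`.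
  refine (hhalf.const_mul (3 / 8 * m)⁻¹).mono' (by fun_prop) (.of_forall fun z => ?_)
  rw [Real.norm_of_nonneg (by positivity), le_inv_mul_iff₀ (by positivity)]
  have := exp_neg_add_mul_le_exp_neg_homothety_of_isMinOn hV (mem_univ v) hv (mem_univ z)
    one_half_pos.le one_half_lt_one.le
  linarith [Real.exp_nonneg (-V z)]

theorem pow_mul_integral_sq_norm_sub_mul_exp_neg_le (hV : StrongConvexOn univ m V) (hm : 0 < m)
    (hv : IsMinOn V univ v) {a : ℝ} (ha₀ : 0 < a) (ha₁ : a < 1) :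
    a ^ finrank ℝ E * (1 + a) * (m / 2) * ∫ z, ‖z - v‖ ^ 2 * exp (-V z) ∂ν
      ≤ finrank ℝ E * ∫ z, exp (-V z) ∂ν := by
  have hint := integrable_exp_neg_of_strongConvexOn ν hV hm
  have hint₂ := integrable_sq_norm_sub_mul_exp_neg ν hV hm hv
  have hle := integral_mono (hint.add (hint₂.const_mul ((1 - a ^ 2) * (m / 2))))
    (integrable_comp_homothety ν hint v ha₀.ne')
    fun z => exp_neg_add_mul_le_exp_neg_homothety_of_isMinOn hV (mem_univ v) hv (mem_univ z)
      ha₀.le ha₁.le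
  simp only [Pi.add_apply] at hle
  rw [integral_add hint (hint₂.const_mul _), integral_const_mul,
    integral_comp_homothety ν (fun z => exp (-V z)), smul_eq_mul, abs_of_pos (by positivity),
    le_inv_mul_iff₀ (by positivity)] at hle
  set I := ∫ z, exp (-V z) ∂ν
  have hI : 0 ≤ I := integral_nonneg fun z => Real.exp_nonneg _
  have hbernoulli : 1 + finrank ℝ E * (a - 1) ≤ a ^ finrank ℝ E := by
    simpa using one_add_mul_le_pow (show -2 ≤ a - 1 by linarith) (finrank ℝ E)
  refine le_of_mul_le_mul_left ?_ (sub_pos.2 ha₁)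
  linarith [mul_le_mul_of_nonneg_right hbernoulli hI]

theorem integral_sq_norm_sub_mul_exp_neg_le (hV : StrongConvexOn univ m V) (hm : 0 < m)
    (hv : IsMinOn V univ v) :
    ∫ z, ‖z - v‖ ^ 2 * exp (-V z) ∂ν ≤ finrank ℝ E / m * ∫ z, exp (-V z) ∂ν := by
  set M := ∫ z, ‖z - v‖ ^ 2 * exp (-V z) ∂ν
  have hlim : Tendsto (fun a : ℝ => a ^ finrank ℝ E * (1 + a) * (m / 2) * M) (𝓝[<] 1)
      (𝓝 (1 ^ finrank ℝ E * (1 + 1) * (m / 2) * M)) :=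
    (Continuous.tendsto (by fun_prop) 1).mono_left nhdsWithin_le_nhds
  have hle := le_of_tendsto hlim <| by
    filter_upwards [Ioo_mem_nhdsLT (zero_lt_one' ℝ)] with a ha
    exact pow_mul_integral_sq_norm_sub_mul_exp_neg_le ν hV hm hv ha.1 ha.2
  rw [one_pow] at hle
  rw [div_mul_eq_mul_div, le_div_iff₀ hm]
  linarith

theorem memLp_sub_tilted_neg (hV : StrongConvexOn univ m V) (hm : 0 < m)
    (hv : IsMinOn V univ v) : MemLp (fun z => z - v) 2 (ν.tilted (-V)) := by
  have hexp : Integrable (fun z => exp ((-V) z)) ν :=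
    integrable_exp_neg_of_strongConvexOn ν hV hm
  rw [memLp_two_iff_integrable_sq_norm (by fun_prop), integrable_tilted_iff hexp]
  simpa [mul_comm] using integrable_sq_norm_sub_mul_exp_neg ν hV hm hv

theorem lpNorm_sub_tilted_neg_le (hV : StrongConvexOn univ m V) (hm : 0 < m)
    (hv : IsMinOn V univ v) :
    lpNorm (fun z => z - v) 2 (ν.tilted (-V)) ≤ √(finrank ℝ E / m) := by
  refine Real.le_sqrt_of_sq_le ?_
  have hpos : 0 < ∫ z, exp (-V z) ∂ν :=
    integral_exp_pos (integrable_exp_neg_of_strongConvexOn ν hV hm)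
  have hdensity : ∀ z, exp (-V z) / (∫ w, exp (-V w) ∂ν) * ‖z - v‖ ^ 2
      = (∫ w, exp (-V w) ∂ν)⁻¹ * (‖z - v‖ ^ 2 * exp (-V z)) := fun z => by ring
  simp only [sq_lpNorm_two (memLp_sub_tilted_neg ν hV hm hv).1, integral_tilted, Pi.neg_apply,
    smul_eq_mul, hdensity]
  rw [integral_const_mul, inv_mul_le_iff₀ hpos, mul_comm]
  exact integral_sq_norm_sub_mul_exp_neg_le ν hV hm hv

theorem norm_mean_tilted_neg_sub_le (hV : StrongConvexOn univ m V) (hm : 0 < m)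
    (hv : IsMinOn V univ v) :
    ‖∫ z, z ∂(ν.tilted (-V)) - v‖ ≤ √(finrank ℝ E / m) := by
  have := isProbabilityMeasure_tilted (integrable_exp_neg_of_strongConvexOn ν hV hm)
  have hmem := memLp_sub_tilted_neg ν hV hm hv
  have hid : Integrable (fun z => z) (ν.tilted (-V)) := by
    simpa [Pi.add_def] using (hmem.integrable one_le_two).add (integrable_const v)
  calc ‖∫ z, z ∂(ν.tilted (-V)) - v‖ = ‖∫ z, (z - v) ∂(ν.tilted (-V))‖ := by
        simp [integral_sub hid (integrable_const v)]
    _ ≤ lpNorm (fun z => z - v) 2 (ν.tilted (-V)) := norm_integral_le_lpNorm one_le_two hmem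
    _ ≤ √(finrank ℝ E / m) := lpNorm_sub_tilted_neg_le ν hV hm hv

theorem lpNorm_sub_mean_tilted_neg_le {K : ℝ≥0} (hU : StrongConvexOn univ m U)
    (hV : StrongConvexOn univ m V) (hm : 0 < m) (hVU : LipschitzWith K (V - U)) :
    lpNorm (fun z => z - ∫ w, w ∂(ν.tilted (-U))) 2 (ν.tilted (-V))
      ≤ 2 * √(finrank ℝ E / m) + K / m := by
  obtain ⟨u, hu⟩ := exists_isMinOn_univ_of_strongConvexOn hU hm
  obtain ⟨v, hv⟩ := exists_isMinOn_univ_of_strongConvexOn hV hm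
  have := isProbabilityMeasure_tilted (integrable_exp_neg_of_strongConvexOn ν hV hm)
  set μ := ∫ w, w ∂(ν.tilted (-U))
  have hvu : ‖v - u‖ ≤ K / m := by
    rw [le_div_iff₀' hm]
    exact mul_norm_sub_le_of_isMinOn_of_lipschitzOnWith hU hV hVU.lipschitzOnWith
      (mem_univ u) hu (mem_univ v) hv
  have hμu : ‖μ - u‖ ≤ √(finrank ℝ E / m) := norm_mean_tilted_neg_sub_le ν hU hm hu
  calc lpNorm (fun z => z - μ) 2 (ν.tilted (-V))
      = lpNorm ((fun z => z - v) + fun _ => v - μ) 2 (ν.tilted (-V)) := by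
        congr 1; ext z; simp
    _ ≤ lpNorm (fun z => z - v) 2 (ν.tilted (-V)) + ‖v - μ‖ := by
        refine (lpNorm_add_le (memLp_sub_tilted_neg ν hV hm hv) one_le_two).trans_eq ?_
        rw [lpNorm_const two_ne_zero (NeZero.ne _)]
        simp
    _ ≤ √(finrank ℝ E / m) + (‖v - u‖ + ‖μ - u‖) := by
        gcongr
        · exact lpNorm_sub_tilted_neg_le ν hV hm hv
        · rw [norm_sub_rev μ u]; exact norm_sub_le_norm_sub_add_norm_sub v u μ
    _ ≤ 2 * √(finrank ℝ E / m) + K / m := by linarith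

theorem integral_sq_norm_sub_mean_le_of_strongConvexOn {K : ℝ≥0} (hU : StrongConvexOn univ m U)
    (hV : StrongConvexOn univ m V) (hm : 0 < m) (hVU : LipschitzWith K (V - U)) {c₁ c₂ : ℝ}
    (hc₁ : ∫ z, c₁ * exp (-U z) ∂ν = 1) (hc₂ : ∫ z, c₂ * exp (-V z) ∂ν = 1) :
    ∫ z, ‖z - ∫ w, (c₁ * exp (-U w)) • w ∂ν‖ ^ 2 * (c₂ * exp (-V z)) ∂ν
      ≤ (2 * √(finrank ℝ E / m) + K / m) ^ 2 := by
  have hmean : ∫ w, (c₁ * exp (-U w)) • w ∂ν = ∫ w, w ∂(ν.tilted (-U)) :=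
    integral_mul_exp_smul_eq_integral_tilted hc₁ _
  have hmoment (a : E) : ∫ z, ‖z - a‖ ^ 2 * (c₂ * exp (-V z)) ∂ν
      = lpNorm (fun z => z - a) 2 (ν.tilted (-V)) ^ 2 := by
    rw [sq_lpNorm_two (by fun_prop),
      ← integral_mul_exp_smul_eq_integral_tilted (u := -V) hc₂ fun z => ‖z - a‖ ^ 2]
    simp only [Pi.neg_apply, smul_eq_mul, mul_comm]
  rw [hmean, hmoment]
  exact pow_le_pow_left₀ lpNorm_nonneg (lpNorm_sub_mean_tilted_neg_le ν hU hV hm hVU) 2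

end LogConcave

theorem tilted_second_moment_bound_general {E : Type*} [NormedAddCommGroup E]
    [InnerProductSpace ℝ E] [FiniteDimensional ℝ E] [MeasurableSpace E] [BorelSpace E]
    (ν : Measure E) [ν.IsAddHaarMeasure] {f : E → ℝ} (hf : ConvexOn ℝ univ f) {L : ℝ}
    (hL : ∀ y z, |f y - f z| ≤ L * ‖y - z‖) {t δ : ℝ} (ht : 0 < t) (hδ : 0 < δ) (x : E)
    {c₁ c₂ : ℝ} {pdf pistar : E → ℝ}
    (hpdf : pdf = fun z => c₁ * exp (-(f z + ‖z - x‖ ^ 2 / (2 * t)) / δ))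
    (hps : pistar = fun z => c₂ * exp (-(2 * f z + ‖z - x‖ ^ 2 / (2 * t)) / δ))
    (hpdf1 : ∫ z, pdf z ∂ν = 1) (hps1 : ∫ z, pistar z ∂ν = 1) :
    ∫ z, ‖z - ∫ w, pdf w • w ∂ν‖ ^ 2 * pistar z ∂ν
      ≤ (2 * √(finrank ℝ E * t * δ) + L * t) ^ 2 := by
  obtain _ | _ := subsingleton_or_nontrivial E
  · simpa [Subsingleton.elim _ (0 : E)] using sq_nonneg _
  have hL₀ : 0 ≤ L := by
    obtain ⟨y, hy⟩ := exists_ne (0 : E)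
    exact nonneg_of_mul_nonneg_left ((abs_nonneg _).trans (hL y 0)) (by simpa using hy)
  set U : E → ℝ := fun z => (f z + ‖z - x‖ ^ 2 / (2 * t)) / δ
  set V : E → ℝ := fun z => (2 * f z + ‖z - x‖ ^ 2 / (2 * t)) / δ
  have hU : StrongConvexOn univ (t * δ)⁻¹ U := strongConvexOn_add_sq_norm_sub_div hf t hδ.le x
  have hV : StrongConvexOn univ (t * δ)⁻¹ V :=
    strongConvexOn_add_sq_norm_sub_div (hf.smul zero_le_two) t hδ.le x
  have hVU : LipschitzWith (.mk (L / δ) (by positivity)) (V - U) := .of_dist_le_mul fun y z => by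
    have hdiff : (V - U) y - (V - U) z = (f y - f z) / δ := by
      simp only [U, V, Pi.sub_apply]
      ring
    rw [Real.dist_eq, hdiff, abs_div, abs_of_pos hδ, dist_eq_norm, NNReal.coe_mk,
      div_mul_eq_mul_div]
    gcongr
    exact hL y z
  simp only [neg_div] at hpdf hps
  subst hpdf hps
  refine (integral_sq_norm_sub_mean_le_of_strongConvexOn ν hU hV (by positivity) hVU
    hpdf1 hps1).trans_eq ?_
  have hshift : L / δ / (t * δ)⁻¹ = L * t := by field_simp
  rw [NNReal.coe_mk, hshift, div_inv_eq_mul, mul_assoc]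

/-- **Second moment bound under the tilted density.** For convex `L`-Lipschitz `f`,
the tilted density `π* ∝ exp(−(2f(z) + ‖z − x‖²/(2t))/δ)` satisfies
`∫ ‖z − μ‖² π* ≤ n t δ + (2√(n t δ) + 3 L t)²`, where `μ` is the mean of
`π ∝ exp(−(f(z) + ‖z − x‖²/(2t))/δ)`. -/
theorem tilted_second_moment_bound (n : ℕ) (f : EuclideanSpace ℝ (Fin n) → ℝ)
    (hf : ConvexOn ℝ Set.univ f) (L : ℝ)
    (hL : ∀ y z : EuclideanSpace ℝ (Fin n), |f y - f z| ≤ L * ‖y - z‖)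
    (t δ : ℝ) (ht : 0 < t) (hδ : 0 < δ) (x : EuclideanSpace ℝ (Fin n))
    (c₁ c₂ : ℝ) (hc₁ : 0 < c₁) (hc₂ : 0 < c₂)
    (pdf pistar : EuclideanSpace ℝ (Fin n) → ℝ)
    (hpdf : pdf = fun z => c₁ * Real.exp (-(f z + ‖z - x‖ ^ 2 / (2 * t)) / δ))
    (hps : pistar = fun z => c₂ * Real.exp (-(2 * f z + ‖z - x‖ ^ 2 / (2 * t)) / δ))
    (hpdf1 : ∫ z, pdf z = 1) (hps1 : ∫ z, pistar z = 1)
    (μ : EuclideanSpace ℝ (Fin n)) (hμ : μ = ∫ z, pdf z • z) :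
    ∫ z, ‖z - μ‖ ^ 2 * pistar z
      ≤ n * t * δ + (2 * Real.sqrt (n * t * δ) + 3 * L * t) ^ 2 := by
  subst hμ
  -- `3 * L` is a Lipschitz constant too, and passing to it now avoids comparing `L * t` with
  -- `3 * L * t`, which fails for the negative `L` that `hL` admits when `n = 0`.
  have h3L : ∀ y z, |f y - f z| ≤ 3 * L * ‖y - z‖ := fun y z => by
    linarith [hL y z, abs_nonneg (f y - f z)]
  simpa using (tilted_second_moment_bound_general volume hf h3L ht hδ x hpdf hps hpdf1 hps1).trans
    (le_add_of_nonneg_left (by positivity : 0 ≤ n * t * δ))
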